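/- With w(x,y|ρ) = (1−ρ²)² − 4xyρ(1+ρ²) + 4ρ²(x²+y²) and transition density f(x|y,ρ) = (2/π)(1−ρ²)√(1−x²)/w(x,y|ρ), for |ρ₁|, |ρ₂| < 1 and x, y₂ ∈ [−1,1]: ∫_{-1}^{1} f(x|y₁,ρ₁)·f(y₁|y₂,ρ₂) dy₁ = f(x|y₂, ρ₁ρ₂). (Chapman–Kolmogorov property.) -/

import Mathlib

/-!
Up to the factor `2 / π * √(1 - x ^ 2)`, the density of the semicircle law, the transition density
`f(x|y, ρ)` is the Poisson-Mehler kernel `∑ₙ ρⁿ Uₙ(x) Uₙ(y)` of the Chebyshev polynomials of the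
second kind. These are orthonormal for the semicircle law, so composing the kernels of parameters
`ρ₁` and `ρ₂` multiplies their `n`-th eigenvalues, `ρ₁ⁿ ρ₂ⁿ = (ρ₁ρ₂)ⁿ`.
-/

open MeasureTheory Polynomial Polynomial.Chebyshev Set
open scoped Real

theorem hasSum_integral_mul_of_pairwise_orthogonal {α ι R : Type*} [MeasurableSpace α]
    [Countable ι] [NormedRing R] [NormedSpace ℝ R] [CompleteSpace R] {μ : Measure α}
    [IsFiniteMeasure μ] {F G : ι → α → R} {f g : α → R} {A B : ι → ℝ}
    (hF : ∀ i, AEStronglyMeasurable (F i) μ) (hG : ∀ i, AEStronglyMeasurable (G i) μ)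
    (hFA : ∀ᵐ t ∂μ, ∀ i, ‖F i t‖ ≤ A i) (hGB : ∀ᵐ t ∂μ, ∀ i, ‖G i t‖ ≤ B i)
    (hA : Summable A) (hB : Summable B)
    (hf : ∀ᵐ t ∂μ, HasSum (F · t) (f t)) (hg : ∀ᵐ t ∂μ, HasSum (G · t) (g t))
    (horth : Pairwise fun i j ↦ ∫ t, F i t * G j t ∂μ = 0) :
    HasSum (fun i ↦ ∫ t, F i t * G i t ∂μ) (∫ t, f t * g t ∂μ) := by
  have hAB : Summable fun p : ι × ι ↦ A p.1 * B p.2 :=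
    summable_mul_of_summable_norm hA.norm hB.norm
  have double : HasSum (fun p : ι × ι ↦ ∫ t, F p.1 t * G p.2 t ∂μ) (∫ t, f t * g t ∂μ) := by
    refine hasSum_integral_of_dominated_convergence (fun p _ ↦ A p.1 * B p.2)
      (fun p ↦ (hF p.1).mul (hG p.2)) (fun p ↦ ?_) (.of_forall fun _ ↦ hAB)
      (integrable_const _) ?_
    · filter_upwards [hFA, hGB] with t hFt hGt
      exact norm_mul_le_of_le (hFt p.1) (hGt p.2)
    · filter_upwards [hFA, hGB, hf, hg] with t hFt hGt hft hgt
      have hFG : Summable fun p : ι × ι ↦ F p.1 t * G p.2 t :=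
        .of_norm_bounded hAB fun p ↦ norm_mul_le_of_le (hFt p.1) (hGt p.2)
      simpa only using hft.mul hgt hFG
  have diag_injective : Function.Injective fun i : ι ↦ (i, i) := fun _ _ h ↦ congrArg Prod.fst h
  refine (diag_injective.hasSum_iff fun p hp ↦ horth fun h ↦ hp ⟨p.1, ?_⟩).2 double
  exact Prod.ext rfl h

theorem two_mul_one_sub_X_sq_mul_U_mul_U (R : Type*) [CommRing R] (n m : ℤ) :
    2 * (1 - X ^ 2) * U R n * U R m = T R (n - m) - T R (n + m + 2) := by
  induction m using Polynomial.Chebyshev.induct with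
  | zero =>
    simp only [U_zero, sub_zero, add_zero]
    linear_combination 2 * one_sub_X_sq_mul_U_eq_pol_in_T R n - T_add_two R n
  | one =>
    have h₁ := T_add_two R (n + 1)
    have h₂ := T_add_two R n
    have h₃ := T_add_two R (n - 1)
    rw [U_one]
    linear_combination (norm := ring_nf) 4 * X * one_sub_X_sq_mul_U_eq_pol_in_T R n
      + h₁ - 2 * (X : R[X]) * h₂ - h₃
  | add_two m ih₁ ih₂ =>
    have h₁ := T_add_two R (n - m - 2)
    have h₂ := T_add_two R (n + m + 2)
    rw [U_add_two]
    linear_combination (norm := ring_nf) 2 * (X : R[X]) * ih₁ - ih₂ - h₁ + h₂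
  | neg_add_one m ih₁ ih₂ =>
    have h₁ := T_add_two R (n + m - 1)
    have h₂ := T_add_two R (n - m + 1)
    rw [U_sub_one]
    linear_combination (norm := ring_nf) 2 * (X : R[X]) * ih₁ - ih₂ - h₁ + h₂

theorem abs_eval_U_le {x : ℝ} (hx : |x| ≤ 1) (n : ℕ) : |(U ℝ n).eval x| ≤ n + 1 := by
  induction n with
  | zero => simp
  | succ n ih =>
    calc |(U ℝ (n + 1 : ℕ)).eval x|
        = |x * (U ℝ n).eval x + (T ℝ (n + 1)).eval x| := by
          simp [U_eq_X_mul_U_add_T]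
      _ ≤ |x| * |(U ℝ n).eval x| + |(T ℝ (n + 1)).eval x| := by
          rw [← abs_mul]; exact abs_add_le _ _
      _ ≤ 1 * (n + 1) + 1 := by
          gcongr; exact abs_eval_T_real_le_one _ hx
      _ = (n + 1 : ℕ) + 1 := by push_cast; ring

theorem eval_U_mul_eval_U_add_four {R : Type*} [CommRing R] (x y : R) (n : ℤ) :
    (U R (n + 4)).eval x * (U R (n + 4)).eval y =
      4 * x * y * ((U R (n + 3)).eval x * (U R (n + 3)).eval y)
      - (4 * x ^ 2 + 4 * y ^ 2 - 2) * ((U R (n + 2)).eval x * (U R (n + 2)).eval y)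
      + 4 * x * y * ((U R (n + 1)).eval x * (U R (n + 1)).eval y)
      - (U R n).eval x * (U R n).eval y := by
  have recurrence (k : ℤ) (z : R) :
      (U R (k + 2)).eval z = 2 * z * (U R (k + 1)).eval z - (U R k).eval z := by simp [U_add_two]
  have h₃ := recurrence (n + 1)
  have h₄ := recurrence (n + 2)
  simp only [add_assoc, Int.reduceAdd] at h₃ h₄
  rw [h₄, h₄, h₃, h₃, recurrence, recurrence]
  ring

/-- The semicircle law on `[-1, 1]`: the probability measure for which the Chebyshev polynomials of
the second kind are orthonormal. The half-open interval is the one used by interval integrals. -/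
noncomputable def semicircleMeasure : Measure ℝ :=
  (volume.restrict (Ioc (-1) 1)).withDensity fun x ↦ ENNReal.ofReal (2 / π * √(1 - x ^ 2))

instance : IsFiniteMeasure semicircleMeasure :=
  isFiniteMeasure_withDensity_ofReal
    (Continuous.integrableOn_Ioc (by fun_prop)).hasFiniteIntegral

theorem ae_semicircleMeasure_abs_le_one : ∀ᵐ x ∂semicircleMeasure, |x| ≤ 1 :=
  (withDensity_absolutelyContinuous _ _).ae_le <|
    (ae_restrict_mem measurableSet_Ioc).mono fun _ hx ↦ abs_le.2 (Ioc_subset_Icc_self hx)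

theorem integral_semicircleMeasure {E : Type*} [NormedAddCommGroup E] [NormedSpace ℝ E]
    (f : ℝ → E) :
    ∫ x, f x ∂semicircleMeasure = ∫ x in -1..1, (2 / π * √(1 - x ^ 2)) • f x := by
  rw [semicircleMeasure, integral_withDensity_eq_integral_toReal_smul (by fun_prop) (by simp),
    intervalIntegral.integral_of_le (by norm_num)]
  congr! 3 with x
  exact ENNReal.toReal_ofReal (by positivity)

theorem integral_semicircleMeasure_eq_integral_measureT (f : ℝ → ℝ) :
    ∫ x, f x ∂semicircleMeasure = π⁻¹ * ∫ x, 2 * (1 - x ^ 2) * f x ∂measureT := by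
  rw [integral_semicircleMeasure, integral_measureT, ← intervalIntegral.integral_const_mul]
  refine intervalIntegral.integral_congr fun x _ ↦ ?_
  have sqrt_eq : √(1 - x ^ 2) = (1 - x ^ 2) * √(1 - x ^ 2)⁻¹ := by
    rw [Real.sqrt_inv, ← div_eq_mul_inv, Real.div_sqrt]
  rw [smul_eq_mul, sqrt_eq]
  ring

theorem integral_eval_U_mul_eval_U_semicircleMeasure (n m : ℕ) :
    ∫ x, (U ℝ n).eval x * (U ℝ m).eval x ∂semicircleMeasure = if n = m then 1 else 0 := by
  have product_to_sum (x : ℝ) : 2 * (1 - x ^ 2) * ((U ℝ n).eval x * (U ℝ m).eval x) =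
      (T ℝ (n - m)).eval x - (T ℝ (n + m + 2)).eval x := by
    simpa [mul_assoc] using congrArg (eval x) (two_mul_one_sub_X_sq_mul_U_mul_U ℝ n m)
  simp_rw [integral_semicircleMeasure_eq_integral_measureT, product_to_sum]
  rw [integral_sub (integrable_measureT (by fun_prop)) (integrable_measureT (by fun_prop)),
    integral_eval_T_real_measureT_of_ne_zero (n := n + m + 2) (by lia), sub_zero]
  split_ifs with h
  · rw [h, sub_self, integral_eval_T_real_measureT_zero, inv_mul_cancel₀ Real.pi_ne_zero]
  · rw [integral_eval_T_real_measureT_of_ne_zero (by lia), mul_zero]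

/-- The Poisson-Mehler kernel `∑ₙ ρⁿ Uₙ(x) Uₙ(y)` of the Chebyshev polynomials of the second kind,
in closed form. It is the transition density `f(x|y, ρ)` relative to `semicircleMeasure`. -/
noncomputable def poissonMehlerKernel (ρ x y : ℝ) : ℝ :=
  (1 - ρ ^ 2) /
    ((1 - ρ ^ 2) ^ 2 - 4 * x * y * ρ * (1 + ρ ^ 2) + 4 * ρ ^ 2 * (x ^ 2 + y ^ 2))

theorem mul_eq_one_sub_sq_of_hasSum_pow_mul_eval_U_mul_eval_U {R : Type*} [CommRing R]
    [TopologicalSpace R] [IsTopologicalRing R] [T2Space R] {ρ x y S : R}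
    (hS : HasSum (fun n : ℕ ↦ ρ ^ n * ((U R n).eval x * (U R n).eval y)) S) :
    S * ((1 - ρ ^ 2) ^ 2 - 4 * x * y * ρ * (1 + ρ ^ 2) + 4 * ρ ^ 2 * (x ^ 2 + y ^ 2)) =
      1 - ρ ^ 2 := by
  have tail (k : ℕ) := (hasSum_nat_add_iff' k).2 hS
  have recurrence_sum := ((((tail 4).sub ((tail 3).mul_left (4 * x * y * ρ))).add
    ((tail 2).mul_left ((4 * x ^ 2 + 4 * y ^ 2 - 2) * ρ ^ 2))).sub
    ((tail 1).mul_left (4 * x * y * ρ ^ 3))).add (hS.mul_left (ρ ^ 4))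
  have recurrence_eq := recurrence_sum.unique <| hasSum_zero.congr_fun fun n ↦ by
    push_cast
    rw [eval_U_mul_eval_U_add_four]
    ring
  have eval_two (z : R) : (U R 2).eval z = 4 * z ^ 2 - 1 := by simp [U_two]
  have eval_three (z : R) : (U R 3).eval z = 2 * z * (4 * z ^ 2 - 1) - 2 * z := by
    simp [U_eq R 3, U_two]
  simp only [Finset.sum_range_succ, Finset.sum_range_zero, Nat.cast_zero, Nat.cast_one,
    Nat.cast_ofNat, U_zero, U_one, eval_one, eval_mul, eval_ofNat, eval_X, eval_two, eval_three]
    at recurrence_eq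
  linear_combination recurrence_eq

section PoissonMehler

variable {ρ x y : ℝ}

theorem summable_abs_pow_mul_add_one_sq (hρ : |ρ| < 1) :
    Summable fun n : ℕ ↦ |ρ| ^ n * (n + 1 : ℝ) ^ 2 := by
  have hsum (k : ℕ) := summable_pow_mul_geometric_of_norm_lt_one k (r := |ρ|) (by simpa using hρ)
  exact (((hsum 2).add ((hsum 1).mul_left 2)).add (hsum 0)).congr fun n ↦ by ring

theorem abs_pow_mul_eval_U_mul_eval_U_le (hx : |x| ≤ 1) (hy : |y| ≤ 1) (n : ℕ) :
    |ρ ^ n * ((U ℝ n).eval x * (U ℝ n).eval y)| ≤ |ρ| ^ n * (n + 1 : ℝ) ^ 2 := by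
  rw [abs_mul, abs_mul, abs_pow, sq]
  gcongr
  exacts [abs_eval_U_le hx n, abs_eval_U_le hy n]

theorem hasSum_poissonMehlerKernel (hρ : |ρ| < 1) (hx : |x| ≤ 1) (hy : |y| ≤ 1) :
    HasSum (fun n : ℕ ↦ ρ ^ n * ((U ℝ n).eval x * (U ℝ n).eval y))
      (poissonMehlerKernel ρ x y) := by
  obtain ⟨S, hS⟩ : Summable fun n : ℕ ↦ ρ ^ n * ((U ℝ n).eval x * (U ℝ n).eval y) :=
    .of_norm_bounded (summable_abs_pow_mul_add_one_sq hρ) (abs_pow_mul_eval_U_mul_eval_U_le hx hy)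
  have mul_eq := mul_eq_one_sub_sq_of_hasSum_pow_mul_eval_U_mul_eval_U hS
  have one_sub_sq_ne : 1 - ρ ^ 2 ≠ 0 := (sub_pos.2 ((sq_lt_one_iff_abs_lt_one ρ).2 hρ)).ne'
  have denom_ne := right_ne_zero_of_mul (mul_eq ▸ one_sub_sq_ne)
  rwa [poissonMehlerKernel, ← eq_div_of_mul_eq denom_ne mul_eq]

theorem integral_poissonMehlerKernel_mul {σ : ℝ} (hρ : |ρ| < 1) (hσ : |σ| < 1)
    (hx : |x| ≤ 1) (hy : |y| ≤ 1) :
    ∫ t, poissonMehlerKernel ρ x t * poissonMehlerKernel σ t y ∂semicircleMeasure =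
      poissonMehlerKernel (ρ * σ) x y := by
  have hρσ : |ρ * σ| < 1 := by
    rw [abs_mul]; exact mul_lt_one_of_nonneg_of_lt_one_left (abs_nonneg ρ) hρ hσ.le
  have integral_terms (n m : ℕ) :
      ∫ t, (ρ ^ n * ((U ℝ n).eval x * (U ℝ n).eval t)) *
        (σ ^ m * ((U ℝ m).eval t * (U ℝ m).eval y)) ∂semicircleMeasure =
      if n = m then (ρ * σ) ^ n * ((U ℝ n).eval x * (U ℝ n).eval y) else 0 := by
    calc
      _ = ∫ t, (ρ ^ n * σ ^ m * ((U ℝ n).eval x * (U ℝ m).eval y)) *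
            ((U ℝ n).eval t * (U ℝ m).eval t) ∂semicircleMeasure := by congr! 2; ring
      _ = _ := by
        rw [integral_const_mul, integral_eval_U_mul_eval_U_semicircleMeasure]
        split_ifs with h
        · rw [h, mul_one, mul_pow]
        · rw [mul_zero]
  have hae := ae_semicircleMeasure_abs_le_one
  have hsum := hasSum_integral_mul_of_pairwise_orthogonal
    (fun n ↦ Continuous.aestronglyMeasurable (by fun_prop))
    (fun n ↦ Continuous.aestronglyMeasurable (by fun_prop))
    (hae.mono fun t ht ↦ abs_pow_mul_eval_U_mul_eval_U_le hx ht)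
    (hae.mono fun t ht ↦ abs_pow_mul_eval_U_mul_eval_U_le ht hy)
    (summable_abs_pow_mul_add_one_sq hρ) (summable_abs_pow_mul_add_one_sq hσ)
    (hae.mono fun t ht ↦ hasSum_poissonMehlerKernel hρ hx ht)
    (hae.mono fun t ht ↦ hasSum_poissonMehlerKernel hσ ht hy)
    fun n m hnm ↦ by simp only [integral_terms, if_neg hnm]
  simp only [integral_terms, if_true] at hsum
  exact hsum.unique (hasSum_poissonMehlerKernel hρσ hx hy)

end PoissonMehler

theorem chapman_kolmogorov (ρ₁ ρ₂ x y₂ : ℝ) (h₁ : |ρ₁| < 1) (h₂ : |ρ₂| < 1)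
    (hx : x ∈ Set.Icc (-1 : ℝ) 1) (hy₂ : y₂ ∈ Set.Icc (-1 : ℝ) 1)
    (w : ℝ → ℝ → ℝ → ℝ)
    (hw : ∀ x y ρ, w x y ρ =
      (1 - ρ ^ 2) ^ 2 - 4 * x * y * ρ * (1 + ρ ^ 2) + 4 * ρ ^ 2 * (x ^ 2 + y ^ 2))
    (f : ℝ → ℝ → ℝ → ℝ)
    (hf : ∀ x y ρ, f x y ρ = (2 / Real.pi) * (1 - ρ ^ 2) * Real.sqrt (1 - x ^ 2) / w x y ρ) :
    ∫ y₁ in (-1 : ℝ)..1, f x y₁ ρ₁ * f y₁ y₂ ρ₂ = f x y₂ (ρ₁ * ρ₂) := by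
  have hfK (x y ρ : ℝ) : f x y ρ = 2 / π * √(1 - x ^ 2) * poissonMehlerKernel ρ x y := by
    rw [hf, hw, poissonMehlerKernel]
    ring
  calc ∫ y₁ in (-1 : ℝ)..1, f x y₁ ρ₁ * f y₁ y₂ ρ₂
      = 2 / π * √(1 - x ^ 2) * ∫ t, poissonMehlerKernel ρ₁ x t * poissonMehlerKernel ρ₂ t y₂
          ∂semicircleMeasure := by
        rw [integral_semicircleMeasure, ← intervalIntegral.integral_const_mul]
        congr! 2
        rw [hfK, hfK, smul_eq_mul]
        ring
    _ = f x y₂ (ρ₁ * ρ₂) := by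
        rw [integral_poissonMehlerKernel_mul h₁ h₂ (abs_le.2 hx) (abs_le.2 hy₂), hfK]
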